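/- Let F_m be the free group of rank m ≥ 1 with free basis A, and let F_m^{(n)} denote the n-th term of the derived series of F_m (F_m^{(1)} = F_m', F_m^{(i+1)} = (F_m^{(i)})'). Then the growth rates of the free soluble groups F_m/F_m^{(n)} with respect to the images of A approach 2m-1 as n → ∞: lim_{n→∞} ω(F_m/F_m^{(n)}, A) = 2m-1. -/

import Mathlib

open Filter Topology

/-- Evaluate a word over the alphabet `A^{±1}` (a letter is a pair `(i, b)`, where
`b = true` means the generator `σ i` and `b = false` means its inverse) in a group. -/
def wordEval {m : ℕ} {G : Type*} [Group G] (σ : Fin m → G)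
    (w : List (Fin m × Bool)) : G :=
  (w.map fun ℓ => if ℓ.2 then σ ℓ.1 else (σ ℓ.1)⁻¹).prod

/-- The ball `B(n) = {g ∈ G : ℓ(g) ≤ n}` of radius `n` in a group with respect to the
generating map `σ`: the set of elements represented by words of length at most `n`. -/
def ball {m : ℕ} {G : Type*} [Group G] (σ : Fin m → G) (n : ℕ) : Set G :=
  {g | ∃ w : List (Fin m × Bool), w.length ≤ n ∧ wordEval σ w = g}

/-- The growth rate `ω(G, A) = lim_{n→∞} |B(n)|^{1/n}`; the limit exists by
submultiplicativity of `|B(n)|`, hence equals the `limsup`. -/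
noncomputable def growthRate {m : ℕ} {G : Type*} [Group G] (σ : Fin m → G) : ℝ :=
  Filter.limsup (fun n : ℕ => ((ball σ n).ncard : ℝ) ^ (1 / (n : ℝ))) Filter.atTop

/-- The terms of the derived series of a group are normal subgroups. -/
instance derivedSeriesNormal (G : Type*) [Group G] (n : ℕ) :
    (derivedSeries G n).Normal :=
  derivedSeries_normal G n


section Flow
variable {m : ℕ}

/-- no nonempty subword is trivial modulo `R` -/
def SA (R : Subgroup (FreeGroup (Fin m))) (w : List (Fin m × Bool)) : Prop :=
  ∀ v, v ≠ [] → v <:+: w → FreeGroup.mk v ∉ R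

open Classical in
/-- indicator function of a point -/
noncomputable def eSingle {X : Type} (x y : X) : ℤ := if y = x then 1 else 0

lemma eSingle_of_ne {X : Type} {x y : X} (h : y ≠ x) : eSingle x y = 0 := if_neg h

/-- the flow permutation attached to a generator -/
noncomputable def flowPerm (Q : Type) [Group Q] (x : Fin m → Q) (i : Fin m) :
    Equiv.Perm (Q × (Q × Fin m → ℤ)) :=
  { toFun := fun p => (x i * p.1, p.2 + eSingle (p.1, i))
    invFun := fun p => ((x i)⁻¹ * p.1, p.2 - eSingle ((x i)⁻¹ * p.1, i))
    left_inv := by intro p; simp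
    right_inv := by intro p; simp }

variable (R : Subgroup (FreeGroup (Fin m))) [R.Normal]

noncomputable def flowAct : FreeGroup (Fin m) →* Equiv.Perm
    ((FreeGroup (Fin m) ⧸ R) × ((FreeGroup (Fin m) ⧸ R) × Fin m → ℤ)) :=
  FreeGroup.lift (flowPerm (FreeGroup (Fin m) ⧸ R) (fun i => QuotientGroup.mk (FreeGroup.of i)))

lemma flowAct_form (g : FreeGroup (Fin m)) :
    ∃ c : (FreeGroup (Fin m) ⧸ R) → ((FreeGroup (Fin m) ⧸ R) × Fin m → ℤ),
      ∀ p, flowAct R g p = ((g : FreeGroup (Fin m) ⧸ R) * p.1, p.2 + c p.1) := by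
  classical
  induction g using FreeGroup.induction_on with
  | C1 => exact ⟨fun _ => 0, by simp⟩
  | of i =>
    refine ⟨fun q => eSingle (q, i), fun p => ?_⟩
    simp only [flowAct, FreeGroup.lift_apply_of, flowPerm, Equiv.coe_fn_mk]
  | inv_of i _ =>
    refine ⟨fun q => - eSingle ((QuotientGroup.mk (FreeGroup.of i))⁻¹ * q, i), fun p => ?_⟩
    rw [map_inv]
    simp only [flowAct, FreeGroup.lift_apply_of, flowPerm, Equiv.Perm.inv_def, Equiv.coe_fn_symm_mk,
      ← sub_eq_add_neg]
    rfl
  | mul g h hg hh =>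
    obtain ⟨c, hc⟩ := hg
    obtain ⟨d, hd⟩ := hh
    refine ⟨fun q => d q + c (h * q), fun p => ?_⟩
    rw [map_mul, Equiv.Perm.mul_apply, hd, hc]
    simp [mul_assoc, add_assoc]

lemma flowAct_comm : ⁅R, R⁆ ≤ (flowAct R).ker := by
  rw [Subgroup.commutator_le]
  intro g hg h hh
  rw [MonoidHom.mem_ker, map_commutatorElement, commutatorElement_eq_one_iff_mul_comm]
  obtain ⟨c, hc⟩ := flowAct_form R g
  obtain ⟨d, hd⟩ := flowAct_form R h
  have h1 : (g : FreeGroup (Fin m) ⧸ R) = 1 := (QuotientGroup.eq_one_iff g).2 hg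
  have h2 : (h : FreeGroup (Fin m) ⧸ R) = 1 := (QuotientGroup.eq_one_iff h).2 hh
  ext1 p
  simp only [Equiv.Perm.mul_apply, hc, hd, h1, h2, one_mul]
  rw [add_right_comm]

/-- flow of a word -/
noncomputable def flow (w : List (Fin m × Bool)) : (FreeGroup (Fin m) ⧸ R) × Fin m → ℤ :=
  (flowAct R (FreeGroup.mk w) (1, 0)).2

/-- last edge of a word with last letter `l` ending at `g`. -/
noncomputable def edge (g : FreeGroup (Fin m) ⧸ R) (l : Fin m × Bool) :
    (FreeGroup (Fin m) ⧸ R) × Fin m → ℤ :=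
  if l.2 then eSingle ((QuotientGroup.mk (FreeGroup.of l.1))⁻¹ * g, l.1)
  else - eSingle (g, l.1)

lemma mk_cons_mul (l : Fin m × Bool) (w : List (Fin m × Bool)) :
    FreeGroup.mk (l :: w) = FreeGroup.mk [l] * FreeGroup.mk w := by
  rw [FreeGroup.mul_mk]; rfl

lemma flow_cons (l : Fin m × Bool) (w : List (Fin m × Bool)) :
    flow R (l :: w) = flow R w + edge R (QuotientGroup.mk (FreeGroup.mk (l :: w))) l := by
  classical
  obtain ⟨c, hc⟩ := flowAct_form R (FreeGroup.mk w)
  obtain ⟨i, b⟩ := l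
  have e1 : (FreeGroup.mk [(i, true)]) = FreeGroup.of i := rfl
  have e2 : (FreeGroup.mk [(i, false)]) = (FreeGroup.of i)⁻¹ := rfl
  unfold flow edge
  rw [mk_cons_mul, map_mul, Equiv.Perm.mul_apply, hc]
  cases b
  · rw [e2, map_inv]
    simp only [flowAct, FreeGroup.lift_apply_of, flowPerm, Equiv.Perm.inv_def,
      Equiv.coe_fn_symm_mk]
    simp [sub_eq_add_neg]
  · rw [e1]
    simp only [flowAct, FreeGroup.lift_apply_of, flowPerm, Equiv.coe_fn_mk]
    simp

lemma flow_avoid (g : FreeGroup (Fin m) ⧸ R) (w : List (Fin m × Bool))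
    (h : ∀ s, s <:+ w → (QuotientGroup.mk (FreeGroup.mk s) : FreeGroup (Fin m) ⧸ R) ≠ g)
    (i : Fin m) :
    flow R w (g, i) = 0 ∧ flow R w ((QuotientGroup.mk (FreeGroup.of i))⁻¹ * g, i) = 0 := by
  classical
  induction w with
  | nil =>
    have : flow R ([] : List (Fin m × Bool)) = 0 := by
      unfold flow
      rw [← FreeGroup.one_eq_mk, map_one]; rfl
    simp [this]
  | cons l w ih =>
    obtain ⟨ih1, ih2⟩ := ih (fun s hs => h s (hs.trans (List.suffix_cons l w)))
    have h1 := h _ (List.suffix_refl (l :: w))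
    have h2 := h _ (List.suffix_cons l w)
    rw [mk_cons_mul] at h1
    rw [flow_cons, mk_cons_mul]
    simp only [Pi.add_apply, ih1, ih2, zero_add]
    obtain ⟨j, b⟩ := l
    have e1 : (FreeGroup.mk [(j, true)]) = FreeGroup.of j := rfl
    have e2 : (FreeGroup.mk [(j, false)]) = (FreeGroup.of j)⁻¹ := rfl
    cases b
    · rw [e2] at h1 ⊢
      simp only [edge, Bool.false_eq_true, if_false, Pi.neg_apply, neg_eq_zero]
      refine ⟨eSingle_of_ne ?_, eSingle_of_ne ?_⟩
      · intro e
        exact h1 (Prod.ext_iff.1 e).1.symm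
      · intro e
        obtain ⟨ea, eb⟩ := Prod.ext_iff.1 e
        simp only at ea eb
        subst eb
        apply h2
        simpa using ea.symm
    · rw [e1] at h1 ⊢
      simp only [edge, if_true]
      refine ⟨eSingle_of_ne ?_, eSingle_of_ne ?_⟩
      · intro e
        apply h2
        have := (Prod.ext_iff.1 e).1
        simpa using this.symm
      · intro e
        obtain ⟨ea, eb⟩ := Prod.ext_iff.1 e
        simp only at ea eb
        subst eb
        apply h1
        rw [QuotientGroup.mk_mul] at ea ⊢
        rw [inv_mul_cancel_left] at ea
        rw [← ea, mul_inv_cancel_left]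

lemma edge_inj (g : FreeGroup (Fin m) ⧸ R) (l l' : Fin m × Bool)
    (h : ∀ i, edge R g l (g, i) = edge R g l' (g, i) ∧
      edge R g l ((QuotientGroup.mk (FreeGroup.of i))⁻¹ * g, i)
        = edge R g l' ((QuotientGroup.mk (FreeGroup.of i))⁻¹ * g, i)) : l = l' := by
  classical
  obtain ⟨i, b⟩ := l
  obtain ⟨j, b'⟩ := l'
  cases b <;> cases b'
  · have := (h i).1
    simp only [edge, Bool.false_eq_true, if_false, Pi.neg_apply, eSingle] at this
    by_cases hij : i = j
    · rw [hij]
    · simp [hij] at this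
  · have := (h i).1
    simp only [edge, Bool.false_eq_true, if_false, if_true, Pi.neg_apply, eSingle] at this
    split_ifs at this <;> simp_all
  · have := (h i).2
    simp only [edge, Bool.false_eq_true, if_false, if_true, Pi.neg_apply, eSingle] at this
    split_ifs at this <;> simp_all
  · have := (h i).2
    simp only [edge, if_true, eSingle] at this
    by_cases hij : i = j
    · rw [hij]
    · simp [hij] at this

variable {R}

lemma SA.tail {l : Fin m × Bool} {w : List (Fin m × Bool)} (h : SA R (l :: w)) : SA R w :=
  fun v hv hvw => h v hv (hvw.trans (List.suffix_cons l w).isInfix)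

lemma SA.avoid {l : Fin m × Bool} {w : List (Fin m × Bool)} (h : SA R (l :: w)) :
    ∀ s, s <:+ w → (QuotientGroup.mk (FreeGroup.mk s) : FreeGroup (Fin m) ⧸ R) ≠
      QuotientGroup.mk (FreeGroup.mk (l :: w)) := by
  rintro s ⟨p, rfl⟩ e
  refine h (l :: p) (by simp) ⟨[], s, by simp⟩ ?_
  have : FreeGroup.mk (l :: (p ++ s)) = FreeGroup.mk (l :: p) * FreeGroup.mk s := by
    rw [FreeGroup.mul_mk]; rfl
  rw [this, QuotientGroup.mk_mul] at e
  rw [← QuotientGroup.eq_one_iff]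
  simpa using e

lemma SA_unique (w : List (Fin m × Bool)) : ∀ w', SA R w → SA R w' →
    (FreeGroup.mk w)⁻¹ * FreeGroup.mk w' ∈ ⁅R, R⁆ → w = w' := by
  induction w with
  | nil =>
    intro w' _ h' he
    by_contra hne
    refine h' w' (fun h => hne h.symm) List.infix_rfl ?_
    have := Subgroup.commutator_le_left R R he
    rw [← FreeGroup.one_eq_mk] at this
    simpa using this
  | cons l w ih =>
    intro w' h h' he
    cases w' with
    | nil =>
      exfalso
      refine h (l :: w) (by simp) List.infix_rfl ?_
      have := Subgroup.commutator_le_left R R he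
      rw [← FreeGroup.one_eq_mk, mul_one] at this
      exact (inv_mem_iff).1 this
    | cons l' w' =>
      have hq : (QuotientGroup.mk (FreeGroup.mk (l :: w)) : FreeGroup (Fin m) ⧸ R) =
          QuotientGroup.mk (FreeGroup.mk (l' :: w')) :=
        QuotientGroup.eq.2 (Subgroup.commutator_le_left R R he)
      have hA : flowAct R (FreeGroup.mk (l :: w)) = flowAct R (FreeGroup.mk (l' :: w')) := by
        have := (MonoidHom.mem_ker).1 (flowAct_comm R he)
        rw [map_mul, map_inv, inv_mul_eq_one] at this
        exact this
      have hf : flow R (l :: w) = flow R (l' :: w') := by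
        unfold flow; rw [hA]
      have hl : l = l' := by
        apply edge_inj R (QuotientGroup.mk (FreeGroup.mk (l :: w)))
        intro i
        have a1 := flow_avoid R _ w h.avoid i
        have a2 := flow_avoid R _ w' h'.avoid i
        rw [← hq] at a2
        rw [flow_cons, flow_cons, ← hq] at hf
        constructor
        · have := congrFun hf (QuotientGroup.mk (FreeGroup.mk (l :: w)), i)
          simp only [Pi.add_apply, a1.1, a2.1, zero_add] at this
          exact this
        · have := congrFun hf ((QuotientGroup.mk (FreeGroup.of i))⁻¹ *
            QuotientGroup.mk (FreeGroup.mk (l :: w)), i)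
          simp only [Pi.add_apply, a1.2, a2.2, zero_add] at this
          exact this
      subst hl
      congr 1
      refine ih w' h.tail h'.tail ?_
      rw [mk_cons_mul l w, mk_cons_mul l w'] at he
      rwa [mul_inv_rev, mul_assoc, inv_mul_cancel_left] at he

end Flow

section Girth
variable {m : ℕ}

lemma letter_not_mem_commutator (l : Fin m × Bool) (n : ℕ) :
    FreeGroup.mk [l] ∉ derivedSeries (FreeGroup (Fin m)) (n + 1) := by
  intro h
  let φ : FreeGroup (Fin m) →* Multiplicative ℤ :=
    FreeGroup.lift (fun _ => Multiplicative.ofAdd 1)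
  have h1 : derivedSeries (FreeGroup (Fin m)) (n + 1) ≤ φ.ker :=
    le_trans (derivedSeries_antitone _ (Nat.succ_le_succ (Nat.zero_le n)))
      (by rw [derivedSeries_one]; exact Abelianization.commutator_subset_ker φ)
  have h2 := (MonoidHom.mem_ker).1 (h1 h)
  obtain ⟨i, b⟩ := l
  cases b <;> simp [φ, FreeGroup.lift_mk] at h2

lemma SA_of_short {n : ℕ} {R : Subgroup (FreeGroup (Fin m))} {w : List (Fin m × Bool)}
    (hR : ∀ w : List (Fin m × Bool), w ≠ [] → FreeGroup.IsReduced w → w.length ≤ n →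
      FreeGroup.mk w ∉ R)
    (hw : FreeGroup.IsReduced w) (hn : w.length ≤ n) : SA R w :=
  fun v hv hvw => hR v hv (hw.infix hvw) (hvw.length_le.trans hn)

lemma girth (n : ℕ) : ∀ w : List (Fin m × Bool), w ≠ [] → FreeGroup.IsReduced w → w.length ≤ n →
    FreeGroup.mk w ∉ derivedSeries (FreeGroup (Fin m)) n := by
  induction n with
  | zero =>
    intro w hw _ hl
    exact absurd (List.length_eq_zero_iff.1 (Nat.le_zero.1 hl)) hw
  | succ n ih =>
    intro w hw hr hl
    match w, hw, hr, hl with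
    | [l], _, _, _ => exact letter_not_mem_commutator l n
    | l :: l' :: w, _, hr, hl =>
      intro h
      have hl' : (l' :: w).length ≤ n := by simp at hl ⊢; omega
      have s1 : SA (derivedSeries (FreeGroup (Fin m)) n) (l' :: w) :=
        SA_of_short ih (hr.infix (List.suffix_cons l _).isInfix) hl'
      have s2 : SA (derivedSeries (FreeGroup (Fin m)) n) [(l.1, !l.2)] :=
        SA_of_short ih FreeGroup.IsReduced.singleton (by simp at hl ⊢; omega)
      have e := SA_unique _ _ s2 s1 (by
        have : (FreeGroup.mk [(l.1, !l.2)])⁻¹ = FreeGroup.mk [l] := by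
          simp [FreeGroup.inv_mk, FreeGroup.invRev]
        rw [this, ← mk_cons_mul]
        exact h)
      have := (FreeGroup.isReduced_cons_cons.1 hr).1
      rw [← (List.cons.inj e).1] at this
      simp at this

end Girth

section Height
variable {k : ℕ}

/-- height of a letter -/
def lh (y : Fin (k + 2) × Bool) : ℤ := if y.1 = 0 then (if y.2 then 1 else -1) else 0

/-- height of a word -/
def hgt (w : List (Fin (k + 2) × Bool)) : ℤ := (w.map lh).sum

@[simp] lemma hgt_nil : hgt ([] : List (Fin (k + 2) × Bool)) = 0 := rfl

@[simp] lemma hgt_append (u v : List (Fin (k + 2) × Bool)) : hgt (u ++ v) = hgt u + hgt v := by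
  simp [hgt]

@[simp] lemma hgt_cons (y) (v : List (Fin (k + 2) × Bool)) : hgt (y :: v) = lh y + hgt v := by
  simp [hgt]

lemma hgt_rep (n : ℕ) : hgt (List.replicate n ((0 : Fin (k + 2)), true)) = n := by
  simp [hgt, lh]

lemma hgt_le (v : List (Fin (k + 2) × Bool)) : |hgt v| ≤ v.length := by
  induction v with
  | nil => simp
  | cons y v ih =>
    have : |lh y| ≤ 1 := by unfold lh; split_ifs <;> simp
    rw [hgt_cons, List.length_cons]
    push_cast
    exact (abs_add_le _ _).trans (by linarith)

lemma hgt_ne (v : List (Fin (k + 2) × Bool)) (n : ℕ) (h : hgt v ≠ 0) :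
    FreeGroup.mk v ∉ derivedSeries (FreeGroup (Fin (k + 2))) (n + 1) := by
  intro hv
  let φ : FreeGroup (Fin (k + 2)) →* Multiplicative ℤ :=
    FreeGroup.lift (fun i => Multiplicative.ofAdd (if i = 0 then 1 else 0))
  have h1 : derivedSeries (FreeGroup (Fin (k + 2))) (n + 1) ≤ φ.ker :=
    le_trans (derivedSeries_antitone _ (Nat.succ_le_succ (Nat.zero_le n)))
      (by rw [derivedSeries_one]; exact Abelianization.commutator_subset_ker φ)
  have h2 := (MonoidHom.mem_ker).1 (h1 hv)
  apply h
  have key : ∀ v, φ (FreeGroup.mk v) = Multiplicative.ofAdd (hgt v) := by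
    intro v
    induction v with
    | nil => rw [← FreeGroup.one_eq_mk, map_one]; rfl
    | cons y v ih =>
      rw [mk_cons_mul, map_mul, ih, hgt_cons, ofAdd_add]
      congr 1
      obtain ⟨i, b⟩ := y
      simp only [φ, FreeGroup.lift_mk, lh]
      cases b <;> by_cases hi : i = 0 <;> simp [hi]
  rw [key] at h2
  exact h2

/-- bridges -/
def Bridge (R : Subgroup (FreeGroup (Fin (k + 2)))) (w : List (Fin (k + 2) × Bool)) : Prop :=
  SA R w ∧ (∀ p, p ≠ [] → p <+: w → 0 < hgt p) ∧ (∀ s, s <:+ w → 0 ≤ hgt s)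

lemma prefix_app {α : Type*} {p u v : List α} (h : p <+: u ++ v) :
    p <+: u ∨ ∃ q, q <+: v ∧ p = u ++ q := by
  obtain ⟨t, ht⟩ := h
  rcases List.append_eq_append_iff.1 ht with ⟨a, h1, h2⟩ | ⟨a, h1, h2⟩
  · exact Or.inl ⟨a, h1.symm⟩
  · exact Or.inr ⟨a, ⟨t, h2.symm⟩, h1⟩

lemma suffix_app {α : Type*} {p u v : List α} (h : p <:+ u ++ v) :
    p <:+ v ∨ ∃ q, q <:+ u ∧ p = q ++ v := by
  obtain ⟨t, ht⟩ := h
  rcases List.append_eq_append_iff.1 ht with ⟨a, h1, h2⟩ | ⟨a, h1, h2⟩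
  · exact Or.inr ⟨a, ⟨t, h1.symm⟩, h2⟩
  · exact Or.inl ⟨a, h2.symm⟩

lemma Bridge.append {n : ℕ} {u v : List (Fin (k + 2) × Bool)}
    (hu : Bridge (derivedSeries (FreeGroup (Fin (k + 2))) (n + 1)) u)
    (hv : Bridge (derivedSeries (FreeGroup (Fin (k + 2))) (n + 1)) v) :
    Bridge (derivedSeries (FreeGroup (Fin (k + 2))) (n + 1)) (u ++ v) := by
  have hu0 := hu.2.2 u List.suffix_rfl
  have hv0 := hv.2.2 v List.suffix_rfl
  refine ⟨?_, ?_, ?_⟩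
  · intro x hx hxw
    rcases List.infix_append_iff_ne_nil.1 hxw with h | h | ⟨s, p, hs, hp, rfl, h1, h2⟩
    · exact hu.1 x hx h
    · exact hv.1 x hx h
    · apply hgt_ne
      have := hu.2.2 _ h1
      have := hv.2.1 _ hp h2
      rw [hgt_append]
      omega
  · intro p hp h
    rcases prefix_app h with h | ⟨q, hh, rfl⟩
    · exact hu.2.1 p hp h
    · by_cases hq : q = []
      · subst hq
        simp at hp ⊢
        exact hu.2.1 u hp List.prefix_rfl
      · have := hv.2.1 q hq hh
        rw [hgt_append]; omega
  · intro p h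
    rcases suffix_app h with h | ⟨q, hh, rfl⟩
    · exact hv.2.2 p h
    · have := hu.2.2 q hh
      rw [hgt_append]; omega

/-- the middle part of a block -/
def Mid (T : ℕ) (C : List (Fin (k + 2) × Bool)) : Prop :=
  (∀ p, p <+: C → -(T : ℤ) ≤ hgt p) ∧ (∀ p, p <:+ C → -(T : ℤ) ≤ hgt p) ∧ 0 ≤ hgt C ∧
  FreeGroup.IsReduced C ∧ (∀ y ∈ C.head?, y = (1, true)) ∧ (∀ y ∈ C.getLast?, y = (1, true))

lemma Mid.nil (T : ℕ) : Mid T ([] : List (Fin (k + 2) × Bool)) := by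
  refine ⟨?_, ?_, ?_, FreeGroup.IsReduced.nil, ?_, ?_⟩ <;> simp

lemma Mid.append {T : ℕ} {u v : List (Fin (k + 2) × Bool)} (hu : Mid T u) (hv : Mid T v) :
    Mid T (u ++ v) := by
  obtain ⟨u1, u2, u3, u4, u5, u6⟩ := hu
  obtain ⟨v1, v2, v3, v4, v5, v6⟩ := hv
  refine ⟨?_, ?_, ?_, ?_, ?_, ?_⟩
  · intro p h
    rcases prefix_app h with h | ⟨q, hh, rfl⟩
    · exact u1 p h
    · have := v1 q hh
      rw [hgt_append]; omega
  · intro p h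
    rcases suffix_app h with h | ⟨q, hh, rfl⟩
    · exact v2 p h
    · have := u2 q hh
      rw [hgt_append]; omega
  · rw [hgt_append]; omega
  · refine List.isChain_append.2 ⟨u4, v4, ?_⟩
    intro x hx y hy _
    rw [u6 x hx, v5 y hy]
  · intro y hy
    cases u with
    | nil => exact v5 y hy
    | cons a u => exact u5 y hy
  · intro y hy
    rcases List.eq_nil_or_concat v with rfl | ⟨v', a, rfl⟩
    · exact u6 y (by simpa using hy)
    · exact v6 y (by simpa [← List.append_assoc] using hy)

lemma isReduced_rep (n : ℕ) (a : Fin (k + 2) × Bool) :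
    FreeGroup.IsReduced (List.replicate n a) :=
  List.isChain_replicate_of_rel n (fun _ => rfl)

/-- a full block -/
def blk (T : ℕ) (C : List (Fin (k + 2) × Bool)) : List (Fin (k + 2) × Bool) :=
  List.replicate (T + 1) (0, true) ++ (C ++ List.replicate T (0, true))

lemma prefix_rep {n : ℕ} {p : List (Fin (k + 2) × Bool)}
    (h : p <+: List.replicate n (0, true)) : hgt p = p.length := by
  rw [List.prefix_replicate_iff] at h
  rw [h.2, hgt_rep]; simp

lemma suffix_rep {n : ℕ} {p : List (Fin (k + 2) × Bool)}
    (h : p <:+ List.replicate n (0, true)) : hgt p = p.length := by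
  rw [List.suffix_replicate_iff] at h
  rw [h.2, hgt_rep]; simp

lemma Mid.bridge {T n : ℕ} {C : List (Fin (k + 2) × Bool)} (h : Mid T C)
    (hn : (blk T C).length ≤ n) :
    Bridge (derivedSeries (FreeGroup (Fin (k + 2))) n) (blk T C) := by
  obtain ⟨u1, u2, u3, u4, u5, u6⟩ := h
  refine ⟨SA_of_short (girth n) ?_ hn, ?_, ?_⟩
  · refine List.isChain_append.2 ⟨isReduced_rep _ _, List.isChain_append.2
      ⟨u4, isReduced_rep _ _, ?_⟩, ?_⟩
    · intro x hx y hy hxy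
      have hy' := List.eq_of_mem_replicate (List.mem_of_mem_head? hy)
      rw [u6 x hx, hy']
    · intro x hx y hy hxy
      have hx' := List.eq_of_mem_replicate (List.mem_of_mem_getLast? hx)
      have hy' : y.2 = true := by
        cases C with
        | nil => rw [List.eq_of_mem_replicate (List.mem_of_mem_head? hy)]
        | cons a C => rw [u5 y hy]
      rw [hx', hy']
  · intro p hp h
    rcases prefix_app h with h | ⟨q, hh, rfl⟩
    · rw [prefix_rep h]
      exact_mod_cast List.length_pos_iff.2 hp
    · rw [hgt_append, hgt_rep]
      push_cast
      rcases prefix_app hh with h2 | ⟨q', h2, rfl⟩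
      · have := u1 q h2
        omega
      · rw [hgt_append, prefix_rep h2]
        omega
  · intro p h
    rcases suffix_app h with h | ⟨q, hh, rfl⟩
    · rcases suffix_app h with h | ⟨q, hh, rfl⟩
      · rw [suffix_rep h]; omega
      · have := u2 q hh
        rw [hgt_append, hgt_rep]; omega
    · rw [hgt_append, hgt_append, hgt_rep, suffix_rep hh]
      omega

end Height

section Count
open Classical in
/-- reduced continuations of the letter `l` of length `t` -/
noncomputable def RExt {m : ℕ} : ℕ → (Fin m × Bool) → Finset (List (Fin m × Bool))
  | 0, _ => {[]}
  | t + 1, l => (Finset.univ.filter (fun y => y ≠ (l.1, !l.2))).biUnion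
      (fun y => (RExt t y).image (fun w => y :: w))

lemma card_RExt {m : ℕ} (t : ℕ) : ∀ l : Fin m × Bool, (RExt t l).card = (2 * m - 1) ^ t := by
  classical
  induction t with
  | zero => intro l; simp [RExt]
  | succ t ih =>
    intro l
    rw [RExt, Finset.card_biUnion]
    · have : ∀ y : Fin m × Bool, ((RExt t y).image (fun w => y :: w)).card = (2 * m - 1) ^ t := by
        intro y
        rw [Finset.card_image_of_injective _ (List.cons_injective), ih]
      simp only [this, Finset.sum_const, smul_eq_mul]
      rw [Finset.filter_ne', Finset.card_erase_of_mem (Finset.mem_univ _), Finset.card_univ,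
        Fintype.card_prod, Fintype.card_fin, Fintype.card_bool, pow_succ, mul_comm m 2, mul_comm]
    · intro x _ y _ hxy
      rw [Function.onFun, Finset.disjoint_left]
      intro w hw hw'
      simp only [Finset.mem_image] at hw hw'
      obtain ⟨u, _, rfl⟩ := hw
      obtain ⟨v, _, hv⟩ := hw'
      exact hxy (List.cons.inj hv).1.symm

lemma mem_RExt {m : ℕ} (t : ℕ) : ∀ (l : Fin m × Bool) (w : List (Fin m × Bool)),
    w ∈ RExt t l ↔ w.length = t ∧ FreeGroup.IsReduced (l :: w) := by
  classical
  induction t with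
  | zero =>
    intro l w
    simp only [RExt, Finset.mem_singleton, List.length_eq_zero_iff]
    constructor
    · rintro rfl; exact ⟨rfl, FreeGroup.IsReduced.singleton⟩
    · exact fun h => h.1
  | succ t ih =>
    intro l w
    simp only [RExt, Finset.mem_biUnion, Finset.mem_filter, Finset.mem_univ, true_and,
      Finset.mem_image, ih]
    have key : ∀ y : Fin m × Bool, y ≠ (l.1, !l.2) ↔ (l.1 = y.1 → l.2 = y.2) := by
      rintro ⟨i, b⟩
      obtain ⟨j, c⟩ := l
      simp only [ne_eq, Prod.mk.injEq, not_and]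
      constructor
      · intro h e
        have := h e.symm
        cases b <;> cases c <;> simp_all
      · intro h e
        have := h e.symm
        cases b <;> cases c <;> simp_all
    constructor
    · rintro ⟨y, hy, u, ⟨hu, hr⟩, rfl⟩
      exact ⟨by simp [hu], FreeGroup.isReduced_cons_cons.2 ⟨(key y).1 hy, hr⟩⟩
    · rintro ⟨hl, hr⟩
      cases w with
      | nil => simp at hl
      | cons y u =>
        have := FreeGroup.isReduced_cons_cons.1 hr
        exact ⟨y, (key y).2 this.1, u, ⟨by simpa using hl, this.2⟩, rfl⟩

open Classical in
/-- concatenations of `n` elements of `S` -/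
noncomputable def lpow {α : Type} (S : Finset (List α)) : ℕ → Finset (List α)
  | 0 => {[]}
  | n + 1 => (S ×ˢ lpow S n).image (fun p => p.1 ++ p.2)

lemma lpow_length {α : Type} (S : Finset (List α)) (T : ℕ) (hS : ∀ w ∈ S, w.length = T) (n : ℕ) :
    ∀ w ∈ lpow S n, w.length = n * T := by
  induction n with
  | zero => intro w hw; simp [lpow] at hw; simp [hw]
  | succ n ih =>
    intro w hw
    simp only [lpow, Finset.mem_image, Finset.mem_product] at hw
    obtain ⟨p, ⟨h1, h2⟩, rfl⟩ := hw
    rw [List.length_append, hS _ h1, ih _ h2]; ring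

lemma lpow_card {α : Type} (S : Finset (List α)) (T : ℕ) (hS : ∀ w ∈ S, w.length = T) (n : ℕ) :
    (lpow S n).card = S.card ^ n := by
  classical
  induction n with
  | zero => simp [lpow]
  | succ n ih =>
    rw [lpow, Finset.card_image_of_injOn, Finset.card_product, ih, pow_succ, mul_comm]
    rintro ⟨a, b⟩ h ⟨c, d⟩ h' e
    simp only [Finset.coe_product, Set.mem_prod, Finset.mem_coe] at h h' e
    have := List.append_inj e (by rw [hS _ h.1, hS _ h'.1])
    rw [this.1, this.2]

lemma lpow_ind {α : Type} (S : Finset (List α)) (P : List α → Prop) (h0 : P [])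
    (hS : ∀ w ∈ S, P w) (ha : ∀ u v, P u → P v → P (u ++ v)) (n : ℕ) :
    ∀ w ∈ lpow S n, P w := by
  induction n with
  | zero => intro w hw; simp [lpow] at hw; rwa [hw]
  | succ n ih =>
    intro w hw
    simp only [lpow, Finset.mem_image, Finset.mem_product] at hw
    obtain ⟨p, ⟨h1, h2⟩, rfl⟩ := hw
    exact ha _ _ (hS _ h1) (ih _ h2)

variable {k : ℕ}

open Classical in
noncomputable def Xset (k t : ℕ) : Finset (List (Fin (k + 2) × Bool)) :=
  (RExt (t + 1) ((1 : Fin (k + 2)), true)).filter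
    (fun u => FreeGroup.IsReduced (((1 : Fin (k + 2)), true) :: (u ++ [(1, true)])))

lemma card_Xset (k t : ℕ) : (2 * (k + 2) - 1) ^ t ≤ (Xset k t).card := by
  classical
  rw [← card_RExt t ((1 : Fin (k + 2)), true)]
  refine le_trans (Finset.card_le_card (t := (Xset k t).image List.dropLast) ?_)
    Finset.card_image_le
  intro u hu
  rw [mem_RExt] at hu
  obtain ⟨hl, hr⟩ := hu
  have : ∃ z : Fin (k + 2) × Bool, FreeGroup.IsReduced [z, (1, true)] ∧
      ∀ y ∈ (((1 : Fin (k + 2)), true) :: u).getLast?, y.1 = z.1 → y.2 = z.2 := by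
    by_cases h : (((1 : Fin (k + 2)), true) :: u).getLast? = some (1, false)
    · refine ⟨(0, true), ?_, ?_⟩
      · rw [FreeGroup.isReduced_cons_cons]
        exact ⟨fun _ => rfl, FreeGroup.IsReduced.singleton⟩
      · rw [h]
        intro y hy e
        simp only [Option.mem_def, Option.some.injEq] at hy
        subst hy
        simp at e
    · refine ⟨(1, true), ?_, ?_⟩
      · rw [FreeGroup.isReduced_cons_cons]
        exact ⟨fun _ => rfl, FreeGroup.IsReduced.singleton⟩
      · rintro ⟨i, b⟩ hy e
        simp only at e
        subst e
        cases b
        · exact absurd hy h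
        · rfl
  obtain ⟨z, hz1, hz2⟩ := this
  have hR : FreeGroup.IsReduced ((((1 : Fin (k + 2)), true) :: u) ++ [z, (1, true)]) := by
    refine List.isChain_append.2 ⟨hr, hz1, ?_⟩
    intro x hx y hy
    simp only [List.head?_cons, Option.mem_def, Option.some.injEq] at hy
    subst hy
    exact hz2 x hx
  refine Finset.mem_image.2 ⟨u ++ [z], ?_, by simp⟩
  refine Finset.mem_filter.2 ⟨(mem_RExt _ _ _).2 ⟨by simp [hl], ?_⟩, ?_⟩
  · exact hR.infix ⟨[], [(1, true)], by simp⟩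
  · simpa using hR

/-- exchange the letters `a` and `a⁻¹` -/
def flipL (y : Fin (k + 2) × Bool) : Fin (k + 2) × Bool := if y.1 = 0 then (y.1, !y.2) else y

lemma flipL_flipL (y : Fin (k + 2) × Bool) : flipL (flipL y) = y := by
  obtain ⟨i, b⟩ := y
  unfold flipL; by_cases h : i = 0 <;> simp [h]

lemma flipL_red (w : List (Fin (k + 2) × Bool)) (h : FreeGroup.IsReduced w) :
    FreeGroup.IsReduced (w.map flipL) := by
  unfold FreeGroup.IsReduced at *
  rw [List.isChain_map]
  refine h.imp ?_
  rintro ⟨i, b⟩ ⟨j, c⟩ h e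
  simp only [flipL] at *
  split_ifs at * <;> simp_all

lemma flipL_hgt (w : List (Fin (k + 2) × Bool)) : hgt (w.map flipL) = - hgt w := by
  induction w with
  | nil => simp
  | cons y w ih =>
    rw [List.map_cons, hgt_cons, hgt_cons, ih]
    have : lh (flipL y) = - lh y := by
      obtain ⟨i, b⟩ := y
      unfold lh flipL
      by_cases h : i = 0 <;> cases b <;> simp [h]
    rw [this]; ring

lemma flipL_X {t : ℕ} {u : List (Fin (k + 2) × Bool)} (h : u ∈ Xset k t) :
    u.map flipL ∈ Xset k t := by
  have e : flipL ((1 : Fin (k + 2)), true) = (1, true) := by simp [flipL]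
  simp only [Xset, Finset.mem_filter, mem_RExt] at h ⊢
  refine ⟨⟨by simpa using h.1.1, ?_⟩, ?_⟩
  · simpa [e] using flipL_red _ h.1.2
  · simpa [e] using flipL_red _ h.2

open Classical in
noncomputable def Vset (k t : ℕ) : Finset (List (Fin (k + 2) × Bool)) :=
  ((Xset k t).filter (fun u => 0 ≤ hgt u)).image
    (fun u => ((1 : Fin (k + 2)), true) :: (u ++ [(1, true)]))

lemma card_Vset (k t : ℕ) : (2 * (k + 2) - 1) ^ t ≤ 2 * (Vset k t).card := by
  classical
  refine (card_Xset k t).trans ?_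
  rw [Vset, Finset.card_image_of_injective]
  · have h1 : Xset k t = (Xset k t).filter (fun u => 0 ≤ hgt u) ∪
        (Xset k t).filter (fun u => hgt u ≤ 0) := by
      rw [← Finset.filter_or, Finset.filter_true_of_mem]
      exact fun u _ => le_total _ _
    have h2 : ((Xset k t).filter (fun u => hgt u ≤ 0)).card ≤
        ((Xset k t).filter (fun u => 0 ≤ hgt u)).card := by
      refine Finset.card_le_card_of_injOn (fun u => u.map flipL) ?_ ?_
      · intro u hu
        simp only [Finset.coe_filter, Set.mem_ofPred_eq] at hu ⊢
        exact ⟨flipL_X hu.1, by rw [flipL_hgt]; omega⟩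
      · refine Set.injOn_of_injective (List.map_injective_iff.2 ?_)
        exact (Function.LeftInverse.injective flipL_flipL)
    have h3 := congrArg Finset.card h1
    have h4 := Finset.card_union_le ((Xset k t).filter (fun u => 0 ≤ hgt u))
        ((Xset k t).filter (fun u => hgt u ≤ 0))
    omega
  · intro u v h
    simpa using h

lemma Vset_length {t : ℕ} {V : List (Fin (k + 2) × Bool)} (h : V ∈ Vset k t) :
    V.length = t + 3 := by
  simp only [Vset, Xset, Finset.mem_image, Finset.mem_filter, mem_RExt] at h
  obtain ⟨u, ⟨⟨⟨h, _⟩, _⟩, _⟩, rfl⟩ := h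
  simp [h]

lemma Vset_mid {t : ℕ} {V : List (Fin (k + 2) × Bool)} (h : V ∈ Vset k t) : Mid (t + 3) V := by
  have hl := Vset_length h
  simp only [Vset, Xset, Finset.mem_image, Finset.mem_filter, mem_RExt] at h
  obtain ⟨u, ⟨⟨⟨_, _⟩, hr⟩, h0⟩, rfl⟩ := h
  refine ⟨?_, ?_, ?_, hr, ?_, ?_⟩
  · intro p hp
    have h1 := hp.length_le
    have h2 := (abs_le.1 (hgt_le p)).1
    omega
  · intro p hp
    have h1 := hp.length_le
    have h2 := (abs_le.1 (hgt_le p)).1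
    omega
  · simpa [lh] using h0
  · intro y hy; simpa using hy.symm
  · intro y hy
    rw [← List.cons_append, List.getLast?_concat] at hy
    simpa using hy.symm

open Classical in
noncomputable def Bset (k t : ℕ) : Finset (List (Fin (k + 2) × Bool)) :=
  (lpow (Vset k t) t).image (blk (t + 3))

/-- block length -/
def bl (t : ℕ) : ℕ := (t + 2) * (t + 3) + 1

lemma Bset_length {t : ℕ} {V : List (Fin (k + 2) × Bool)} (h : V ∈ Bset k t) :
    V.length = bl t := by
  simp only [Bset, Finset.mem_image] at h
  obtain ⟨C, hC, rfl⟩ := h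
  have := lpow_length _ _ (fun w hw => Vset_length hw) _ _ hC
  simp only [blk, List.length_append, List.length_replicate, this, bl]
  ring

lemma Bset_card (t : ℕ) : (Bset k t).card = (Vset k t).card ^ t := by
  rw [Bset, Finset.card_image_of_injective, lpow_card _ _ (fun w hw => Vset_length hw)]
  intro u v h
  simpa [blk] using h

lemma Bset_bridge {t n : ℕ} (hn : bl t ≤ n) {V : List (Fin (k + 2) × Bool)} (h : V ∈ Bset k t) :
    Bridge (derivedSeries (FreeGroup (Fin (k + 2))) n) V := by
  have hl := Bset_length h
  simp only [Bset, Finset.mem_image] at h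
  obtain ⟨C, hC, rfl⟩ := h
  refine Mid.bridge ?_ (by omega)
  exact lpow_ind _ (Mid (t + 3)) (Mid.nil _) (fun w hw => Vset_mid hw)
    (fun u v hu hv => hu.append hv) _ _ hC

end Count

section Ball
variable {m : ℕ}

/-- the generating map of the free soluble group -/
abbrev gens (m n : ℕ) : Fin m → FreeGroup (Fin m) ⧸ derivedSeries (FreeGroup (Fin m)) n :=
  fun i => QuotientGroup.mk (FreeGroup.of i)

lemma wordEval_gens (n : ℕ) (w : List (Fin m × Bool)) :
    wordEval (gens m n) w = QuotientGroup.mk (FreeGroup.mk w) := by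
  induction w with
  | nil => rw [← FreeGroup.one_eq_mk]; rfl
  | cons l w ih =>
    rw [mk_cons_mul, QuotientGroup.mk_mul, ← ih]
    simp only [wordEval, List.map_cons, List.prod_cons]
    congr 1
    obtain ⟨i, b⟩ := l
    cases b <;> rfl

open Classical in
lemma ball_subset (n r : ℕ) : ball (gens m n) r ⊆
    (((Finset.range (r + 1)).biUnion (fun j => insert [] (Finset.univ.biUnion (fun l => RExt j l)))).image
      (fun w => wordEval (gens m n) w) : Finset _) := by
  rintro g ⟨w, hw, rfl⟩
  rw [Finset.coe_image]
  refine ⟨FreeGroup.reduce w, ?_, ?_⟩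
  · have hlen : (FreeGroup.reduce w).length ≤ r := by
      have := FreeGroup.norm_mk_le (L₁ := w)
      rw [FreeGroup.norm, FreeGroup.toWord_mk] at this
      omega
    have hred : FreeGroup.IsReduced (FreeGroup.reduce w) := by
      rw [← FreeGroup.toWord_mk]; exact FreeGroup.isReduced_toWord
    simp only [Finset.mem_coe, Finset.mem_biUnion, Finset.mem_range, Finset.mem_insert,
      Finset.mem_univ, true_and]
    refine ⟨_, Nat.lt_succ_of_le hlen, ?_⟩
    generalize FreeGroup.reduce w = v at *
    cases v with
    | nil => exact Or.inl rfl
    | cons l v =>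
      exact Or.inr ⟨l, (mem_RExt _ _ _).2 ⟨rfl, FreeGroup.isReduced_cons_cons.2
        ⟨fun _ => rfl, hred⟩⟩⟩
  · simp only [wordEval_gens, FreeGroup.reduce.self]

lemma ball_finite (n r : ℕ) : (ball (gens m n) r).Finite :=
  (Finset.finite_toSet _).subset (ball_subset n r)

lemma ball_card_le (hm : 1 ≤ m) (n r : ℕ) :
    (ball (gens m n) r).ncard ≤ (r + 1) * (1 + 2 * m) * (2 * m - 1) ^ r := by
  classical
  refine (Set.ncard_le_ncard (ball_subset n r) (Finset.finite_toSet _)).trans ?_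
  rw [Set.ncard_coe_finset]
  refine Finset.card_image_le.trans (Finset.card_biUnion_le.trans ?_)
  have h1 : 1 ≤ 2 * m - 1 := by omega
  have : ∀ j ∈ Finset.range (r + 1),
      (insert [] (Finset.univ.biUnion (fun l : Fin m × Bool => RExt j l))).card ≤
        (1 + 2 * m) * (2 * m - 1) ^ r := by
    intro j hj
    have hj' : j ≤ r := by simpa [Nat.lt_succ_iff] using hj
    have h2 : (2 * m - 1) ^ j ≤ (2 * m - 1) ^ r := Nat.pow_le_pow_right h1 hj'
    have h3 : 1 ≤ (2 * m - 1) ^ r := Nat.one_le_pow _ _ h1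
    refine (Finset.card_insert_le _ _).trans ?_
    have : (Finset.univ.biUnion (fun l : Fin m × Bool => RExt j l)).card ≤
        2 * m * (2 * m - 1) ^ j := by
      refine Finset.card_biUnion_le.trans ?_
      simp only [card_RExt, Finset.sum_const, Finset.card_univ, Fintype.card_prod, Fintype.card_fin,
        Fintype.card_bool, smul_eq_mul]
      rw [mul_comm m 2]
    have h4 : 2 * m * (2 * m - 1) ^ j ≤ 2 * m * (2 * m - 1) ^ r := Nat.mul_le_mul_left _ h2
    rw [add_mul]
    omega
  refine (Finset.sum_le_card_nsmul _ _ _ this).trans ?_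
  simp [mul_assoc]

lemma one_le_ball (n r : ℕ) : 1 ≤ (ball (gens m n) r).ncard := by
  rw [Nat.one_le_iff_ne_zero, Ne, Set.ncard_eq_zero (ball_finite n r)]
  exact Set.Nonempty.ne_empty ⟨_, [], by simp, rfl⟩

lemma ball_card_ge {k t n : ℕ} (hn : bl t ≤ n) (q : ℕ) :
    ((Vset k t).card ^ t) ^ q ≤ (ball (gens (k + 2) (n + 1)) (q * bl t)).ncard := by
  classical
  obtain ⟨n, rfl⟩ : ∃ n', n = n' + 1 := ⟨n - 1, by unfold bl at hn; omega⟩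
  rw [← Bset_card, ← lpow_card _ (bl t) (fun w hw => Bset_length hw)]
  have hb : ∀ w ∈ lpow (Bset k t) q, Bridge (derivedSeries (FreeGroup (Fin (k + 2))) (n + 1)) w := by
    refine lpow_ind _ _ ?_ (fun w hw => Bset_bridge hn hw) (fun u v hu hv => hu.append hv) _
    refine ⟨?_, ?_, ?_⟩
    · intro v hv h; simp at h; exact absurd h hv
    · intro v hv h; simp at h; exact absurd h hv
    · intro s h; simp at h; simp [h]
  have hinj : Set.InjOn (fun w => wordEval (gens (k + 2) (n + 1 + 1)) w)
      (lpow (Bset k t) q : Set (List (Fin (k + 2) × Bool))) := by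
    intro u hu v hv e
    simp only [wordEval_gens] at e
    exact SA_unique u v (hb u hu).1 (hb v hv).1 (QuotientGroup.eq.1 e)
  rw [← Finset.card_image_of_injOn hinj, ← Set.ncard_coe_finset]
  refine Set.ncard_le_ncard ?_ (ball_finite _ _)
  intro g hg
  rw [Finset.mem_coe, Finset.mem_image] at hg
  obtain ⟨w, hw, rfl⟩ := hg
  exact ⟨w, (lpow_length _ _ (fun w hw => Bset_length hw) _ _ hw).le, rfl⟩

end Ball

section Analysis

/-- upper bound sequence -/
noncomputable def ub (m r : ℕ) : ℝ :=
  (((r + 1) * (1 + 2 * m) * (2 * m - 1) ^ r : ℕ) : ℝ) ^ (1 / (r : ℝ))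

lemma ub_tendsto {m : ℕ} (hm : 1 ≤ m) : Tendsto (ub m) atTop (𝓝 (2 * (m : ℝ) - 1)) := by
  have hc : ((2 * m - 1 : ℕ) : ℝ) = 2 * (m : ℝ) - 1 := by
    rw [Nat.cast_sub (by omega)]; push_cast; ring
  have h1 : Tendsto (fun r : ℕ => ((r : ℝ) + 1) ^ (1 / (r : ℝ))) atTop (𝓝 1) := by
    have h := tendsto_rpow_div_mul_add 1 1 (-1) (by norm_num)
    have h' := h.comp ((tendsto_natCast_atTop_atTop (R := ℝ)).atTop_add
      (tendsto_const_nhds (x := (1 : ℝ))))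
    refine h'.congr (fun r => ?_)
    simp
  have h2 : Tendsto (fun r : ℕ => (1 + 2 * (m : ℝ)) ^ (1 / (r : ℝ))) atTop (𝓝 1) := by
    have h := (tendsto_const_nhds (x := (1 + 2 * (m : ℝ)))).rpow
      (tendsto_one_div_atTop_nhds_zero_nat (𝕜 := ℝ)) (Or.inl (by positivity))
    rwa [Real.rpow_zero] at h
  have h3 := (h1.mul h2).mul_const (2 * (m : ℝ) - 1)
  rw [one_mul, one_mul] at h3
  refine h3.congr' ?_
  filter_upwards [eventually_ge_atTop 1] with r hr
  have hr' : (r : ℝ) ≠ 0 := by positivity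
  have h0 : 0 ≤ 2 * (m : ℝ) - 1 := by rw [← hc]; positivity
  unfold ub
  rw [Nat.cast_mul, Nat.cast_mul, Nat.cast_pow, hc, Real.mul_rpow (by positivity) (by positivity),
    Real.mul_rpow (by positivity) (by positivity)]
  congr 1
  · push_cast; rfl
  · rw [← Real.rpow_natCast, ← Real.rpow_mul h0, mul_one_div_cancel hr', Real.rpow_one]

lemma ball_le_ub {m : ℕ} (hm : 1 ≤ m) (n r : ℕ) :
    ((ball (gens m n) r).ncard : ℝ) ^ (1 / (r : ℝ)) ≤ ub m r := by
  unfold ub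
  refine Real.rpow_le_rpow (by positivity) ?_ (by positivity)
  exact_mod_cast ball_card_le hm n r

lemma bdd {m : ℕ} (hm : 1 ≤ m) (n : ℕ) : IsBoundedUnder (· ≤ ·) atTop
    (fun r : ℕ => ((ball (gens m n) r).ncard : ℝ) ^ (1 / (r : ℝ))) :=
  (ub_tendsto hm).isBoundedUnder_le.mono_le (Eventually.of_forall (ball_le_ub hm n))

lemma growth_le {m : ℕ} (hm : 1 ≤ m) (n : ℕ) : growthRate (gens m n) ≤ 2 * (m : ℝ) - 1 := by
  rw [← (ub_tendsto hm).limsup_eq]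
  refine limsup_le_limsup (Eventually.of_forall (ball_le_ub hm n)) ?_
    (ub_tendsto hm).isBoundedUnder_le
  refine IsBoundedUnder.isCoboundedUnder_le ⟨0, ?_⟩
  exact eventually_map.2 (Eventually.of_forall (fun r => by positivity))

lemma one_le_growth {m : ℕ} (hm : 1 ≤ m) (n : ℕ) : 1 ≤ growthRate (gens m n) := by
  refine le_limsup_of_frequently_le (Frequently.of_forall (fun r => ?_)) (bdd hm n)
  refine Real.one_le_rpow ?_ (by positivity)
  exact_mod_cast one_le_ball n r

/-- lower bound sequence -/
noncomputable def lb (k t : ℕ) : ℝ :=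
  (((2 * ((k + 2 : ℕ) : ℝ) - 1) ^ t / 2) ^ t) ^ (1 / (bl t : ℝ))

lemma lb_le {k t n : ℕ} (hn : bl t ≤ n) : lb k t ≤ growthRate (gens (k + 2) (n + 1)) := by
  refine le_limsup_of_frequently_le ?_ (bdd (by omega) _)
  have hbl : 0 < bl t := by unfold bl; omega
  rw [frequently_atTop]
  intro a
  refine ⟨(a + 1) * bl t, by nlinarith, ?_⟩
  have h := ball_card_ge (k := k) hn (a + 1)
  have hV : (2 * ((k + 2 : ℕ) : ℝ) - 1) ^ t / 2 ≤ ((Vset k t).card : ℝ) := by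
    have := card_Vset k t
    have h2 : (((2 * (k + 2) - 1) ^ t : ℕ) : ℝ) ≤ ((2 * (Vset k t).card : ℕ) : ℝ) := by
      exact_mod_cast this
    rw [Nat.cast_pow, Nat.cast_sub (by omega)] at h2
    push_cast at h2 ⊢
    linarith
  have h0 : (0 : ℝ) ≤ (2 * ((k + 2 : ℕ) : ℝ) - 1) := by push_cast; linarith [Nat.cast_nonneg (α := ℝ) k]
  have h1 : lb k t ≤ (((Vset k t).card : ℝ) ^ t) ^ (1 / (bl t : ℝ)) := by
    unfold lb
    refine Real.rpow_le_rpow (by positivity) ?_ (by positivity)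
    exact pow_le_pow_left₀ (by positivity) hV _
  refine h1.trans ?_
  have h2 : ((((Vset k t).card : ℝ) ^ t) ^ (a + 1)) ^ (1 / (((a + 1) * bl t : ℕ) : ℝ)) =
      (((Vset k t).card : ℝ) ^ t) ^ (1 / (bl t : ℝ)) := by
    rw [← Real.rpow_natCast (((Vset k t).card : ℝ) ^ t) (a + 1), ← Real.rpow_mul (by positivity)]
    congr 1
    push_cast
    field_simp
  rw [← h2]
  refine Real.rpow_le_rpow (by positivity) ?_ (by positivity)
  exact_mod_cast h

lemma lb_tendsto (k : ℕ) : Tendsto (lb k) atTop (𝓝 (2 * ((k + 2 : ℕ) : ℝ) - 1)) := by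
  set c : ℝ := 2 * ((k + 2 : ℕ) : ℝ) - 1 with hcdef
  have hc : 0 < c := by rw [hcdef]; push_cast; linarith [Nat.cast_nonneg (α := ℝ) k]
  have hinv : Tendsto (fun t : ℕ => ((t : ℝ))⁻¹) atTop (𝓝 0) :=
    tendsto_inv_atTop_nhds_zero_nat
  have hden : Tendsto (fun t : ℕ => 1 + 5 * ((t : ℝ))⁻¹ + 7 * (((t : ℝ))⁻¹ * ((t : ℝ))⁻¹)) atTop
      (𝓝 (1 + 5 * 0 + 7 * (0 * 0))) :=
    (tendsto_const_nhds.add (hinv.const_mul 5)).add ((hinv.mul hinv).const_mul 7)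
  have hnum : Tendsto (fun t : ℕ => Real.log c - Real.log 2 * ((t : ℝ))⁻¹) atTop
      (𝓝 (Real.log c - Real.log 2 * 0)) := tendsto_const_nhds.sub (hinv.const_mul _)
  have h := (hnum.div hden (by norm_num)).rexp
  have e : Real.exp ((Real.log c - Real.log 2 * 0) / (1 + 5 * 0 + 7 * (0 * 0))) = c := by
    simp [Real.exp_log hc]
  rw [e] at h
  refine h.congr' ?_
  filter_upwards [eventually_ge_atTop 1] with t ht
  have ht' : (t : ℝ) ≠ 0 := by positivity
  unfold lb
  rw [← hcdef, Real.rpow_def_of_pos (by positivity), Real.log_pow, Real.log_div (by positivity)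
    (by norm_num), Real.log_pow]
  congr 1
  unfold bl
  push_cast
  simp only [Pi.div_apply]
  have : ((t : ℝ) + 2) * (t + 3) + 1 ≠ 0 := by positivity
  have : 1 + 5 * ((t : ℝ))⁻¹ + 7 * (((t : ℝ))⁻¹ * ((t : ℝ))⁻¹) ≠ 0 := by positivity
  field_simp
  ring

end Analysis

/-- The growth rates of the free soluble groups `F_m/F_m^{(n)}`
(where `F_m^{(n)}` is the `n`-th term of the derived series of the free group `F_m`,
with `F_m^{(1)} = F_m'`) with respect to the images of the free basis `A` approach
`2m - 1` as `n → ∞`. -/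
theorem growth_rate_free_soluble_tendsto (m : ℕ) (hm : 1 ≤ m) :
    Filter.Tendsto
      (fun n : ℕ => growthRate (fun i =>
        (QuotientGroup.mk (FreeGroup.of i) :
          FreeGroup (Fin m) ⧸ derivedSeries (FreeGroup (Fin m)) n)))
      Filter.atTop (nhds (2 * (m : ℝ) - 1)) := by
  have key : Tendsto (fun n : ℕ => growthRate (gens m n)) atTop (𝓝 (2 * (m : ℝ) - 1)) := by
    rw [tendsto_order]
    refine ⟨fun a ha => ?_, fun a ha => Eventually.of_forall
      (fun n => (growth_le hm n).trans_lt ha)⟩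
    rcases Nat.lt_or_ge m 2 with h2 | h2
    · obtain rfl : m = 1 := by omega
      refine Eventually.of_forall (fun n => lt_of_lt_of_le ha ?_)
      refine le_trans ?_ (one_le_growth hm n)
      norm_num
    · obtain ⟨k, rfl⟩ : ∃ k, m = k + 2 := ⟨m - 2, by omega⟩
      obtain ⟨t, ht⟩ := ((lb_tendsto k).eventually (lt_mem_nhds ha)).exists
      filter_upwards [eventually_ge_atTop (bl t + 1)] with n hn
      obtain ⟨n, rfl⟩ : ∃ n', n = n' + 1 := ⟨n - 1, by omega⟩
      exact ht.trans_le (lb_le (by omega))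
  exact key
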